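/- Let n ≥ 2, λ > -n/2, and fix unit vectors η, ζ ∈ ℝⁿ. For r ∈ [0,1), the derivative in r of (1-r²)^(1+2λ)/|rη - ζ|^(n+2λ) is at least -((n+2λ-(n-2λ-2)r)(1-r²)^(2λ))/|rη-ζ|^(n+2λ). -/

import Mathlib

theorem norm_smul_sub_sq_of_unit {E : Type*} [NormedAddCommGroup E] [InnerProductSpace ℝ E]
    {η ζ : E} (hη : ‖η‖ = 1) (hζ : ‖ζ‖ = 1) (s : ℝ) :
    ‖s • η - ζ‖ ^ 2 = s ^ 2 - 2 * inner ℝ η ζ * s + 1 := by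
  rw [norm_sub_sq_real, norm_smul, hη, hζ, real_inner_smul_left, mul_one, Real.norm_eq_abs, sq_abs]
  ring

theorem norm_smul_sub_rpow_of_unit {E : Type*} [NormedAddCommGroup E] [InnerProductSpace ℝ E]
    {η ζ : E} (hη : ‖η‖ = 1) (hζ : ‖ζ‖ = 1) (s m : ℝ) :
    ‖s • η - ζ‖ ^ m = (s ^ 2 - 2 * inner ℝ η ζ * s + 1) ^ (m / 2) := by
  rw [← norm_smul_sub_sq_of_unit hη hζ, ← Real.rpow_natCast, ← Real.rpow_mul (norm_nonneg _)]
  congr 1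
  push_cast
  ring

theorem hasDerivAt_rpow_div_rpow {r t a k : ℝ} (hr : 0 < 1 - r ^ 2)
    (hD : 0 < r ^ 2 - 2 * t * r + 1) :
    HasDerivAt (fun s : ℝ => (1 - s ^ 2) ^ (1 + a) / (s ^ 2 - 2 * t * s + 1) ^ k)
      ((1 - r ^ 2) ^ a / (r ^ 2 - 2 * t * r + 1) ^ k *
        (-2 * r * (1 + a) - 2 * k * (1 - r ^ 2) * (r - t) / (r ^ 2 - 2 * t * r + 1))) r := by
  have hu : HasDerivAt (fun s : ℝ => 1 - s ^ 2) (-(2 * r)) r := by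
    simpa using (hasDerivAt_pow 2 r).const_sub 1
  have hv : HasDerivAt (fun s : ℝ => s ^ 2 - 2 * t * s + 1) (2 * r - 2 * t) r := by
    simpa using ((hasDerivAt_pow 2 r).sub ((hasDerivAt_id r).const_mul (2 * t))).add_const 1
  have hDk := Real.rpow_pos_of_pos hD k
  refine ((hu.rpow_const (p := 1 + a) (Or.inl hr.ne')).div
    (hv.rpow_const (p := k) (Or.inl hD.ne')) hDk.ne').congr_deriv ?_
  rw [add_sub_cancel_left, Real.rpow_add hr, Real.rpow_one, Real.rpow_sub_one hD.ne']
  field_simp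

theorem stmt5 (n : ℕ) (hn : 2 ≤ n) (l : ℝ) (hl : -(n / 2 : ℝ) < l)
    (η ζ : EuclideanSpace ℝ (Fin n)) (hη : ‖η‖ = 1) (hζ : ‖ζ‖ = 1)
    (r : ℝ) (hr : r ∈ Set.Ico (0:ℝ) 1) (d : ℝ)
    (hd : HasDerivAt (fun s : ℝ => (1 - s ^ 2) ^ (1 + 2 * l) / ‖s • η - ζ‖ ^ ((n : ℝ) + 2 * l)) d r) :
    -((n + 2 * l - (n - 2 * l - 2) * r) * (1 - r ^ 2) ^ (2 * l)) / ‖r • η - ζ‖ ^ ((n : ℝ) + 2 * l) ≤ d := by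
  obtain ⟨h0, h1⟩ := hr
  simp only [norm_smul_sub_rpow_of_unit hη hζ] at hd ⊢
  obtain ⟨ht, ht'⟩ : -1 ≤ inner ℝ η ζ ∧ inner ℝ η ζ ≤ 1 := by
    simpa [hη, hζ, abs_le] using abs_real_inner_le_norm η ζ
  generalize inner ℝ η ζ = t at *
  have hu : 0 < 1 - r ^ 2 := by nlinarith
  have hD : 0 < r ^ 2 - 2 * t * r + 1 := by nlinarith [mul_nonneg h0 (sub_nonneg.2 ht')]
  rw [hd.unique (hasDerivAt_rpow_div_rpow hu hD), neg_mul_eq_neg_mul, mul_div_assoc, mul_comm]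
  refine mul_le_mul_of_nonneg_left ?_
    (div_nonneg (Real.rpow_nonneg hu.le _) (Real.rpow_nonneg hD.le _))
  have key : (1 - r ^ 2) * (r - t) / (r ^ 2 - 2 * t * r + 1) ≤ 1 - r := by
    rw [div_le_iff₀ hD]
    nlinarith [mul_nonneg (mul_nonneg (sub_nonneg.2 h1.le) (sub_nonneg.2 h1.le))
      (neg_le_iff_add_nonneg.1 ht)]
  have hm : 0 ≤ (n : ℝ) + 2 * l := by linarith
  have := mul_le_mul_of_nonneg_left key hm
  rw [mul_div_cancel₀ _ two_ne_zero, mul_assoc ((n : ℝ) + 2 * l), mul_div_assoc]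
  linarith
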